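/- Let A be a complete deterministic register automaton with k registers over an infinite data domain D, and let X ⊆ D be any set with |X| = 2k + 1. Then A has a synchronizing data word if and only if A has a synchronizing data word w with data(w) ⊆ X. -/

import Mathlib

open scoped Classical

/-- Register constraints over a set `R` of registers: built from the atom `true` and
atoms `= r` for `r ∈ R` using conjunction and negation. -/
inductive RC (R : Type) : Type
  | tt : RC R
  | req : R → RC R
  | conj : RC R → RC R → RC R
  | neg : RC R → RC R

/-- Satisfaction of a register constraint by a register valuation `ν` and a datum `d`. -/
def RC.sat {R D : Type} (ν : R → D) (d : D) : RC R → Prop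
  | RC.tt => True
  | RC.req r => ν r = d
  | RC.conj φ ψ => RC.sat ν d φ ∧ RC.sat ν d ψ
  | RC.neg φ => ¬ RC.sat ν d φ

/-- A configuration: a location together with a register valuation. -/
abbrev Config (L R D : Type) : Type := L × (R → D)

/-- A transition: source location, letter, guard, update set, target location. -/
abbrev RATrans (L A R : Type) : Type := L × A × RC R × Set R × L

/-- The update `ν[up := d]` of a register valuation. -/
noncomputable def updVal {R D : Type} (ν : R → D) (up : Set R) (d : D) : R → D :=
  fun r => if r ∈ up then d else ν r

/-- One-step successor relation of the register automaton with transition relation `T`: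
`Step T q (a, d) q'` holds iff `q' ∈ post(q, (a, d))`. -/
def Step {L A R D : Type} (T : Set (RATrans L A R)) (q : Config L R D) (i : A × D)
    (q' : Config L R D) : Prop :=
  ∃ (φ : RC R) (up : Set R) (ℓ' : L),
    (q.1, i.1, φ, up, ℓ') ∈ T ∧ RC.sat q.2 i.2 φ ∧ q' = (ℓ', updVal q.2 up i.2)

/-- `post` of a set of configurations on a single input. -/
def postStep {L A R D : Type} (T : Set (RATrans L A R)) (S : Set (Config L R D)) (i : A × D) :
    Set (Config L R D) :=
  {q' | ∃ q ∈ S, Step T q i q'}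

/-- `post` of a set of configurations on a data word. -/
def postWord {L A R D : Type} (T : Set (RATrans L A R)) (S : Set (Config L R D)) :
    List (A × D) → Set (Config L R D)
  | [] => S
  | i :: w => postWord T (postStep T S i) w

/-- Completeness: every configuration has at least one successor on every input. -/
def RAComplete (D : Type) {L A R : Type} (T : Set (RATrans L A R)) : Prop :=
  ∀ (q : Config L R D) (i : A × D), ∃ q', Step T q i q'

/-- Determinism: every configuration has at most one successor on every input. -/
def RADet (D : Type) {L A R : Type} (T : Set (RATrans L A R)) : Prop :=
  ∀ (q : Config L R D) (i : A × D) (q₁ q₂ : Config L R D),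
    Step T q i q₁ → Step T q i q₂ → q₁ = q₂

/-- The set of data values occurring in a data word. -/
def dataSet {A D : Type} (w : List (A × D)) : Set D := {d | ∃ p ∈ w, p.2 = d}

/-- A synchronizing data word: a nonempty data word sending the set of all
configurations to a single configuration. -/
def IsSync (D : Type) {L A R : Type} (T : Set (RATrans L A R)) (w : List (A × D)) : Prop :=
  w ≠ [] ∧ ∃ q : Config L R D, postWord T (Set.univ : Set (Config L R D)) w = {q}


theorem sat_congr' {R D : Type} (ν ν' : R → D) (d d' : D) (h : ∀ r, ν r = d ↔ ν' r = d')
    (φ : RC R) : RC.sat ν d φ ↔ RC.sat ν' d' φ := by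
  induction φ with
  | tt => simp [RC.sat]
  | req r => simpa [RC.sat] using h r
  | conj a b iha ihb => simp [RC.sat, iha, ihb]
  | neg a iha => simp [RC.sat, iha]

def runW {Q I : Type} (δ : Q → I → Q) : List I → Q → Q
  | [], q => q
  | i :: w, q => runW δ w (δ q i)

theorem runW_append {Q I : Type} (δ : Q → I → Q) (u v : List I) (q : Q) :
    runW δ (u ++ v) q = runW δ v (runW δ u q) := by
  induction u generalizing q with
  | nil => rfl
  | cons i u ih => simp [runW, ih]

theorem postWord_eq {L A R D : Type} (T : Set (RATrans L A R))
    (δ : Config L R D → A × D → Config L R D)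
    (hδ : ∀ q i q', Step T q i q' ↔ q' = δ q i) (w : List (A × D)) (S : Set (Config L R D)) :
    postWord T S w = runW δ w '' S := by
  induction w generalizing S with
  | nil => simp [postWord, runW]
  | cons i w ih =>
    rw [postWord, ih]
    ext p
    simp only [postStep, hδ, runW, Set.mem_image, Set.mem_ofPred_eq]
    constructor
    · rintro ⟨_, ⟨q, hq, rfl⟩, e⟩
      exact ⟨q, hq, e⟩
    · rintro ⟨q, hq, e⟩
      exact ⟨_, ⟨q, hq, rfl⟩, e⟩

theorem step_rel {L A R D : Type} (T : Set (RATrans L A R))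
    (δ : Config L R D → A × D → Config L R D)
    (hδ : ∀ q i q', Step T q i q' ↔ q' = δ q i)
    (q q' : Config L R D) (a : A) (d d' : D) (h1 : q.1 = q'.1)
    (h2 : ∀ r, q.2 r = d ↔ q'.2 r = d') :
    ∃ ℓ up, δ q (a, d) = (ℓ, updVal q.2 up d) ∧ δ q' (a, d') = (ℓ, updVal q'.2 up d') := by
  obtain ⟨φ, up, ℓ, hT, hs, he⟩ := (hδ q (a, d) _).2 rfl
  refine ⟨ℓ, up, he, ?_⟩
  symm
  rw [← hδ]
  refine ⟨φ, up, ℓ, ?_, ?_, rfl⟩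
  · rw [← h1]; exact hT
  · exact (sat_congr' _ _ _ _ h2 φ).1 hs

theorem run_range {L A R D : Type} (T : Set (RATrans L A R))
    (δ : Config L R D → A × D → Config L R D)
    (hδ : ∀ q i q', Step T q i q' ↔ q' = δ q i) (Y : Set D)
    (w : List (A × D)) (hw : dataSet w ⊆ Y) (q : Config L R D) (hq : ∀ r, q.2 r ∈ Y) :
    ∀ r, (runW δ w q).2 r ∈ Y := by
  induction w generalizing q with
  | nil => exact hq
  | cons i w ih =>
    obtain ⟨a, d⟩ := i
    refine ih (fun x hx => hw ?_) _ ?_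
    · obtain ⟨p, hp, rfl⟩ := hx
      exact ⟨p, by simp [hp], rfl⟩
    · obtain ⟨ℓ, up, he, -⟩ := step_rel T δ hδ q q a d d rfl (fun _ => Iff.rfl)
      intro r
      rw [he]
      simp only [updVal]
      split_ifs
      · exact hw ⟨(a, d), by simp, rfl⟩
      · exact hq r

theorem dataSet_cons {A D : Type} {a : A} {d : D} {w : List (A × D)} {Y : Set D} :
    dataSet ((a, d) :: w) ⊆ Y ↔ d ∈ Y ∧ dataSet w ⊆ Y := by
  constructor
  · intro h
    exact ⟨h ⟨(a, d), by simp, rfl⟩, fun x ⟨p, hp, e⟩ => h ⟨p, by simp [hp], e⟩⟩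
  · rintro ⟨h1, h2⟩ x ⟨p, hp, rfl⟩
    rcases List.mem_cons.1 hp with rfl | hp
    · exact h1
    · exact h2 ⟨p, hp, rfl⟩

theorem dataSet_append {A D : Type} {u w : List (A × D)} {Y : Set D}
    (h1 : dataSet u ⊆ Y) (h2 : dataSet w ⊆ Y) : dataSet (u ++ w) ⊆ Y := by
  rintro x ⟨p, hp, rfl⟩
  rcases List.mem_append.1 hp with hp | hp
  · exact h1 ⟨p, hp, rfl⟩
  · exact h2 ⟨p, hp, rfl⟩

theorem sim {L A R D : Type} [Fintype R] (T : Set (RATrans L A R))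
    (δ : Config L R D → A × D → Config L R D)
    (hδ : ∀ q i q', Step T q i q' ↔ q' = δ q i) (X Y : Set D)
    (hX : X.ncard = 2 * Fintype.card R + 1)
    (w : List (A × D)) (hw : dataSet w ⊆ Y) (q₁ q₂ : Config L R D) (f : D → D)
    (hf : Set.InjOn f (Set.range q₁.2 ∪ Set.range q₂.2))
    (hfX : ∀ y ∈ Set.range q₁.2 ∪ Set.range q₂.2, y ∈ Y → f y ∈ X) :
    ∃ (u : List (A × D)) (g : D → D), dataSet u ⊆ X ∧
      (∀ y ∈ Set.range (runW δ w q₁).2 ∪ Set.range (runW δ w q₂).2, y ∈ Y → g y ∈ X) ∧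
      runW δ u (q₁.1, f ∘ q₁.2) = ((runW δ w q₁).1, g ∘ (runW δ w q₁).2) ∧
      runW δ u (q₂.1, f ∘ q₂.2) = ((runW δ w q₂).1, g ∘ (runW δ w q₂).2) := by
  induction w generalizing q₁ q₂ f with
  | nil => exact ⟨[], f, by simp [dataSet], hfX, rfl, rfl⟩
  | cons i w ih =>
    obtain ⟨a, d⟩ := i
    obtain ⟨hd, hw⟩ := dataSet_cons.1 hw
    set S := Set.range q₁.2 ∪ Set.range q₂.2 with hS
    have hSfin : S.Finite := (Set.finite_range _).union (Set.finite_range _)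
    have hScard : S.ncard ≤ 2 * Fintype.card R := by
      have h : ∀ v : R → D, (Set.range v).ncard ≤ Fintype.card R := by
        intro v
        rw [← Set.image_univ]
        refine (Set.ncard_image_le Set.finite_univ).trans ?_
        simp [Set.ncard_univ]
      have := Set.ncard_union_le (Set.range q₁.2) (Set.range q₂.2)
      rw [← hS] at this
      have := h q₁.2
      have := h q₂.2
      omega
    have key : ∃ f' : D → D, Set.InjOn f' (insert d S) ∧ (∀ y ∈ S, f' y = f y) ∧
        ∀ y ∈ insert d S, y ∈ Y → f' y ∈ X := by
      by_cases hdS : d ∈ S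
      · rw [Set.insert_eq_of_mem hdS]
        exact ⟨f, hf, fun _ _ => rfl, hfX⟩
      · have : ∃ x ∈ X, x ∉ f '' S := by
          apply Set.exists_mem_notMem_of_ncard_lt_ncard _ (hSfin.image f)
          have := Set.ncard_image_le (f := f) hSfin
          omega
        obtain ⟨x, hxX, hx⟩ := this
        have hne : ∀ y ∈ S, y ≠ d := fun y hy e => hdS (e ▸ hy)
        have hag : ∀ y ∈ S, Function.update f d x y = f y := fun y hy => by simp [hne y hy]
        refine ⟨Function.update f d x, ?_, hag, ?_⟩
        · rw [Set.injOn_insert hdS]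
          refine ⟨hf.congr (fun y hy => (hag y hy).symm), ?_⟩
          rintro ⟨y, hy, e⟩
          rw [hag y hy] at e
          simp only [Function.update_self] at e
          exact hx ⟨y, hy, e⟩
        · rintro y (rfl | hy) hyY
          · simpa using hxX
          · rw [hag y hy]; exact hfX y hy hyY
    obtain ⟨f', hinj, hag, hX'⟩ := key
    have stp : ∀ q : Config L R D, Set.range q.2 ⊆ S →
        Set.range (δ q (a, d)).2 ⊆ insert d S ∧
        δ (q.1, f ∘ q.2) (a, f' d) = ((δ q (a, d)).1, f' ∘ (δ q (a, d)).2) := by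
      intro q hq
      have hq' : ∀ r, q.2 r ∈ S := fun r => hq ⟨r, rfl⟩
      obtain ⟨ℓ, up, e1, e2⟩ := step_rel T δ hδ q (q.1, f ∘ q.2) a d (f' d) rfl (by
        intro r
        simp only [Function.comp]
        rw [← hag _ (hq' r)]
        exact (hinj.eq_iff (Set.mem_insert_of_mem _ (hq' r)) (Set.mem_insert _ _)).symm)
      rw [e1, e2]
      constructor
      · rintro _ ⟨r, rfl⟩
        simp only [updVal]
        split_ifs
        · exact Set.mem_insert _ _
        · exact Set.mem_insert_of_mem _ (hq' r)
      · refine Prod.ext rfl ?_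
        funext r
        simp only [updVal, Function.comp]
        split_ifs
        · rfl
        · exact (hag _ (hq' r)).symm
    obtain ⟨s1, e1⟩ := stp q₁ Set.subset_union_left
    obtain ⟨s2, e2⟩ := stp q₂ Set.subset_union_right
    have hsub := Set.union_subset s1 s2
    obtain ⟨u, g, hu, hg, r1, r2⟩ := ih hw (δ q₁ (a, d)) (δ q₂ (a, d)) f' (hinj.mono hsub)
      (fun y hy => hX' y (hsub hy))
    refine ⟨(a, f' d) :: u, g, dataSet_cons.2 ⟨hX' d (Set.mem_insert _ _) hd, hu⟩, hg, ?_, ?_⟩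
    · simp only [runW]; rw [e1, r1]
    · simp only [runW]; rw [e2, r2]

noncomputable def abst {L R D : Type} (X : Set D) (q : Config L R D) : L × (R → Option X) :=
  (q.1, fun r => if h : q.2 r ∈ X then some ⟨q.2 r, h⟩ else none)

theorem abst_iff {L R D : Type} (X : Set D) (q q' : Config L R D) :
    abst X q = abst X q' ↔ q.1 = q'.1 ∧ ∀ r, ∀ x ∈ X, q.2 r = x ↔ q'.2 r = x := by
  simp only [abst, Prod.mk.injEq, funext_iff]
  refine and_congr Iff.rfl (forall_congr' fun r => ?_)
  by_cases h : q.2 r ∈ X <;> by_cases h' : q'.2 r ∈ X <;> simp [h, h']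
  · constructor
    · intro e x _; rw [e]
    · intro e; exact ((e _ h).1 rfl).symm
  · exact ⟨_, h, fun e => h' ((e.1 rfl) ▸ h)⟩
  · exact ⟨_, h', fun e => h ((e.2 rfl) ▸ h')⟩
  · intro x hx
    exact ⟨fun e => absurd (e ▸ hx) h, fun e => absurd (e ▸ hx) h'⟩

theorem abst_run {L A R D : Type} (T : Set (RATrans L A R))
    (δ : Config L R D → A × D → Config L R D)
    (hδ : ∀ q i q', Step T q i q' ↔ q' = δ q i) (X : Set D)
    (w : List (A × D)) (hw : dataSet w ⊆ X) (q q' : Config L R D) (h : abst X q = abst X q') :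
    abst X (runW δ w q) = abst X (runW δ w q') := by
  induction w generalizing q q' with
  | nil => exact h
  | cons i w ih =>
    obtain ⟨a, d⟩ := i
    obtain ⟨hd, hw⟩ := dataSet_cons.1 hw
    refine ih hw _ _ ?_
    obtain ⟨h1, h2⟩ := (abst_iff _ _ _).1 h
    obtain ⟨ℓ, up, e1, e2⟩ := step_rel T δ hδ q q' a d d h1 (fun r => h2 r d hd)
    rw [e1, e2, abst_iff]
    refine ⟨rfl, fun r x hx => ?_⟩
    simp only [updVal]
    split_ifs
    · rfl
    · exact h2 r x hx

theorem stmt15 {L A R D : Type} [Fintype L] [Fintype A] [Fintype R] [Infinite D]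
    (T : Set (RATrans L A R))
    (hcomp : RAComplete D T) (hdet : RADet D T)
    (X : Set D) (hX : X.ncard = 2 * Fintype.card R + 1) :
    (∃ w : List (A × D), IsSync D T w) ↔
    (∃ w : List (A × D), IsSync D T w ∧ dataSet w ⊆ X) := by
  refine ⟨?_, fun ⟨w, h, _⟩ => ⟨w, h⟩⟩
  rintro ⟨w, hne, qw, hqw⟩
  choose δ hδ0 using hcomp
  have hδ : ∀ q i q', Step T q i q' ↔ q' = δ q i := fun q i q' =>
    ⟨fun h => hdet q i _ _ h (hδ0 q i), fun h => h ▸ hδ0 q i⟩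
  rw [postWord_eq T δ hδ] at hqw
  have hrun : ∀ q, runW δ w q = qw := fun q => by
    have : runW δ w q ∈ runW δ w '' Set.univ := ⟨q, trivial, rfl⟩
    rw [hqw] at this; exact this
  have hXfin : X.Finite := Set.finite_of_ncard_ne_zero (by omega)
  have hXne : X.Nonempty := Set.nonempty_of_ncard_ne_zero (by omega)
  obtain ⟨x0, hx0⟩ := hXne
  obtain ⟨⟨a0, _⟩, _⟩ := List.exists_mem_of_ne_nil w hne
  -- values of the final configuration occur in the word
  have hqwd : ∀ r, qw.2 r ∈ dataSet w := by
    intro r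
    obtain ⟨c, hc⟩ := exists_ne (qw.2 r)
    have := run_range T δ hδ (insert c (dataSet w)) w (Set.subset_insert _ _)
      (qw.1, fun _ => c) (fun _ => Set.mem_insert _ _) r
    rw [hrun] at this
    rcases this with h | h
    · exact absurd h.symm hc
    · exact h
  have hwfin : (dataSet w).Finite := by
    refine (List.finite_toSet (w.map Prod.snd)).subset ?_
    rintro x ⟨p, hp, rfl⟩
    exact List.mem_map.2 ⟨p, hp, rfl⟩
  -- an injection avoiding the data of the word
  have havoid : ∃ h : D → D, Function.Injective h ∧ ∀ x, h x ∉ dataSet w := by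
    have := Cardinal.mk_compl_finset_of_infinite hwfin.toFinset
    rw [Set.Finite.coe_toFinset] at this
    obtain ⟨e⟩ := Cardinal.eq.1 this
    exact ⟨fun x => (e.symm x).1, fun x y hxy => e.symm.injective (Subtype.ext hxy),
      fun x => (e.symm x).2⟩
  obtain ⟨h, hinj, hav⟩ := havoid
  have : Nonempty D := ⟨x0⟩
  -- single configurations
  have single : ∀ q : Config L R D, ∃ u, dataSet u ⊆ X ∧ ∀ r, (runW δ u q).2 r ∈ X := by
    intro q
    have hli := Function.leftInverse_invFun hinj
    have hr : Set.range (h ∘ q.2) ∪ Set.range (h ∘ q.2) ⊆ Set.range h := by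
      rw [Set.union_self]; exact Set.range_comp_subset_range _ _
    obtain ⟨u, g, hu, hg, e, -⟩ := sim T δ hδ X (dataSet w) hX w subset_rfl
      (q.1, h ∘ q.2) (q.1, h ∘ q.2) (Function.invFun h)
      (by
        refine Set.InjOn.mono hr ?_
        rintro _ ⟨x, rfl⟩ _ ⟨y, rfl⟩ hxy
        rw [hli, hli] at hxy; rw [hxy])
      (by
        intro y hy hyY
        obtain ⟨x, rfl⟩ := hr hy
        exact absurd hyY (hav x))
    refine ⟨u, hu, fun r => ?_⟩
    have e0 : (Function.invFun h ∘ h ∘ q.2) = q.2 := by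
      funext r; exact hli _
    simp only [e0, hrun] at e hg
    change runW δ u q = _ at e
    rw [e]
    exact hg _ (Or.inl ⟨r, rfl⟩) (hqwd r)
  have multi : ∀ S : Set (Config L R D), S.Finite →
      ∃ u, dataSet u ⊆ X ∧ ∀ q ∈ S, ∀ r, (runW δ u q).2 r ∈ X := by
    intro S hS
    induction S, hS using Set.Finite.induction_on with
    | empty => exact ⟨[], by simp [dataSet], by simp⟩
    | @insert q S _ _ ih =>
      obtain ⟨u, hu, hS⟩ := ih
      obtain ⟨v, hv, hq⟩ := single (runW δ u q)
      refine ⟨u ++ v, dataSet_append hu hv, ?_⟩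
      rintro p (rfl | hp)
      · rw [runW_append]; exact hq
      · rw [runW_append]; exact run_range T δ hδ X v hv _ (hS p hp)
  have all : ∃ u, dataSet u ⊆ X ∧ ∀ q : Config L R D, ∀ r, (runW δ u q).2 r ∈ X := by
    have : Finite X := hXfin
    have : Nonempty (Config L R D) := ⟨qw⟩
    let rep : L × (R → Option X) → Config L R D := Function.invFun (abst X)
    obtain ⟨u, hu, hS⟩ := multi (Set.range rep) (Set.finite_range _)
    refine ⟨u, hu, fun q r => ?_⟩
    have e : abst X (rep (abst X q)) = abst X q :=
      Function.invFun_eq (f := abst X) (b := abst X q) ⟨q, rfl⟩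
    have e2 := ((abst_iff _ _ _).1 (abst_run T δ hδ X u hu _ _ e)).2 r
    have hm := hS (rep (abst X q)) ⟨_, rfl⟩ r
    rw [(e2 _ hm).1 rfl]
    exact hm
  -- pairs of configurations
  have merge : ∀ S : Set (Config L R D), S.Finite → (∀ q ∈ S, ∀ r, q.2 r ∈ X) →
      ∃ u, dataSet u ⊆ X ∧ ∃ p : Config L R D, (∀ r, p.2 r ∈ X) ∧ ∀ q ∈ S, runW δ u q = p := by
    intro S hS
    induction S, hS using Set.Finite.induction_on with
    | empty => exact fun _ => ⟨[], by simp [dataSet], (qw.1, fun _ => x0), fun _ => hx0, by simp⟩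
    | @insert q S _ _ ih =>
      intro hg
      obtain ⟨u, hu, p, hp, hS⟩ := ih (fun q hq => hg q (Set.mem_insert_of_mem _ hq))
      have hq' := run_range T δ hδ X u hu q (hg q (Set.mem_insert _ _))
      obtain ⟨v, g, hv, -, e1, e2⟩ := sim T δ hδ X Set.univ hX w (Set.subset_univ _)
        (runW δ u q) p id (Set.injOn_id _)
        (by
          rintro y (⟨r, rfl⟩ | ⟨r, rfl⟩) _
          · exact hq' r
          · exact hp r)
      simp only [hrun, Function.id_comp] at e1 e2
      refine ⟨u ++ v, dataSet_append hu hv, runW δ v p, run_range T δ hδ X v hv p hp, ?_⟩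
      rintro s (rfl | hs)
      · rw [runW_append]; exact e1.trans e2.symm
      · rw [runW_append, hS s hs]
  obtain ⟨u, hu, hall⟩ := all
  obtain ⟨v, hv, p, -, hvp⟩ := merge {q | ∀ r, q.2 r ∈ X} (by
    refine (Set.Finite.prod (Set.finite_univ (α := L))
      (Set.Finite.pi (fun _ : R => hXfin))).subset ?_
    intro q hq
    exact ⟨trivial, by simpa using hq⟩) (fun q hq => hq)
  refine ⟨u ++ (v ++ [(a0, x0)]), ⟨by simp, δ p (a0, x0), ?_⟩,
    dataSet_append hu (dataSet_append hv (dataSet_cons.2 ⟨hx0, by simp [dataSet]⟩))⟩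
  rw [postWord_eq T δ hδ]
  have hfin : ∀ q, runW δ (u ++ (v ++ [(a0, x0)])) q = δ p (a0, x0) := by
    intro q
    rw [runW_append, runW_append, hvp _ (hall q)]
    rfl
  ext s
  simp only [Set.mem_image, Set.mem_univ, true_and, hfin, Set.mem_singleton_iff]
  exact ⟨fun ⟨_, e⟩ => e.symm, fun e => ⟨qw, e.symm⟩⟩
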